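/- arXiv:2301.08777 — 5 statements merged into one kernel-verified Lean document; each statement's English description precedes it below -/
import Mathlib

section
/- Let G be a nonempty tournament and let J be any tournament of order n ≥ 1. Then there exists an integer r with r ≤ n + C(n,2) (where C(n,2) = n(n−1)/2) such that J is isomorphic to a subtournament of ILTT_d^r(G). -/
open scoped Classical

noncomputable section

/-- A tournament: a finite directed graph where every pair of distinct nodes
is joined by exactly one arc. -/
structure Tournament where
  V : Type
  [fintypeV : Fintype V]
  [decEqV : DecidableEq V]
  arc : V → V → Prop
  irrefl : ∀ x, ¬ arc x x
  exactlyOne : ∀ x y, x ≠ y → (arc x y ↔ ¬ arc y x)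

attribute [instance] Tournament.fintypeV Tournament.decEqV

namespace Tournament

/-- The ILTT extension: vertices are `V ⊕ V` where `Sum.inl x` is the original
node `x` and `Sum.inr x` is its clone `x'`. -/
def ILTT (T : Tournament) : Tournament where
  V := T.V ⊕ T.V
  arc := fun u v =>
    match u, v with
    | Sum.inl x, Sum.inl y => T.arc x y
    | Sum.inl x, Sum.inr y => T.arc x y
    | Sum.inr x, Sum.inl y => T.arc x y ∨ x = y
    | Sum.inr x, Sum.inr y => T.arc x y
  irrefl := by rintro (x | x) h <;> exact T.irrefl x h
  exactlyOne := by
    rintro (x | x) (y | y) hxy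
    · exact T.exactlyOne x y (fun h => hxy (by rw [h]))
    · by_cases h : x = y
      · subst h; simp [T.irrefl x]
      · have := T.exactlyOne x y h
        simp only [not_or]
        constructor
        · intro ha; exact ⟨this.mp ha, fun h' => h h'.symm⟩
        · intro ha; exact this.mpr ha.1
    · by_cases h : x = y
      · subst h; simp [T.irrefl x]
      · have := T.exactlyOne x y h
        constructor
        · rintro (ha | ha)
          · exact this.mp ha
          · exact absurd ha h
        · intro ha; exact Or.inl (this.mpr ha)
    · exact T.exactlyOne x y (fun h => hxy (by rw [h]))

/-- The dual ILTT extension: identical to `ILTT` except the arcs between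
clones are reversed. -/
def ILTTd (T : Tournament) : Tournament where
  V := T.V ⊕ T.V
  arc := fun u v =>
    match u, v with
    | Sum.inl x, Sum.inl y => T.arc x y
    | Sum.inl x, Sum.inr y => T.arc x y
    | Sum.inr x, Sum.inl y => T.arc x y ∨ x = y
    | Sum.inr x, Sum.inr y => T.arc y x
  irrefl := by rintro (x | x) h <;> exact T.irrefl x h
  exactlyOne := by
    rintro (x | x) (y | y) hxy
    · exact T.exactlyOne x y (fun h => hxy (by rw [h]))
    · by_cases h : x = y
      · subst h; simp [T.irrefl x]
      · have := T.exactlyOne x y h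
        simp only [not_or]
        constructor
        · intro ha; exact ⟨this.mp ha, fun h' => h h'.symm⟩
        · intro ha; exact this.mpr ha.1
    · by_cases h : x = y
      · subst h; simp [T.irrefl x]
      · have := T.exactlyOne x y h
        constructor
        · rintro (ha | ha)
          · exact this.mp ha
          · exact absurd ha h
        · intro ha; exact Or.inl (this.mpr ha)
    · exact T.exactlyOne y x (fun h => hxy (by rw [h]))

/-- A tournament is strong if, for every ordered pair of nodes, there is a
directed path from the first to the second. -/
def Strong (T : Tournament) : Prop := ∀ u v : T.V, Relation.ReflTransGen T.arc u v

/-- `HasWalk T u v n` : there is a directed walk of length `n` from `u` to `v`. -/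
def HasWalk (T : Tournament) (u v : T.V) (n : ℕ) : Prop :=
  ∃ f : Fin (n + 1) → T.V, f 0 = u ∧ f (Fin.last n) = v ∧
    ∀ i : Fin n, T.arc (f i.castSucc) (f i.succ)

/-- The distance from `u` to `v`: the length of a shortest directed path. -/
def dist (T : Tournament) (u v : T.V) : ℕ := sInf {n | HasWalk T u v n}

/-- The diameter: the maximum distance over ordered pairs of distinct nodes. -/
def diam (T : Tournament) : ℕ :=
  (Finset.univ.filter (fun p : T.V × T.V => p.1 ≠ p.2)).sup
    (fun p => T.dist p.1 p.2)

/-- The Wiener index: the sum of distances over ordered pairs of distinct nodes. -/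
def wiener (T : Tournament) : ℕ :=
  ∑ p ∈ Finset.univ.filter (fun p : T.V × T.V => p.1 ≠ p.2), T.dist p.1 p.2

/-- The average distance `L(T) = W(T)/(m(m-1))` where `m` is the order. -/
def avgDist (T : Tournament) : ℝ :=
  (T.wiener : ℝ) / ((Fintype.card T.V : ℝ) * ((Fintype.card T.V : ℝ) - 1))

/-- `J` is a subtournament of `K`. -/
def IsSubtournament (J K : Tournament) : Prop :=
  ∃ f : J.V → K.V, Function.Injective f ∧ ∀ u v : J.V, J.arc u v ↔ K.arc (f u) (f v)

/-- The linear order on `t` nodes. -/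
def linearTournament (t : ℕ) : Tournament where
  V := Fin t
  arc := fun i j => i < j
  irrefl := fun i => lt_irrefl i
  exactlyOne := fun i j h => by
    rw [not_lt]
    exact ⟨le_of_lt, fun hle => hle.lt_of_ne h⟩

/-- A tournament is Hamiltonian if it has a directed cycle through all nodes. -/
def IsHamiltonian (T : Tournament) : Prop :=
  ∃ f : ZMod (Fintype.card T.V) ≃ T.V, ∀ i, T.arc (f i) (f (i + 1))

/-- `S` is an in-dominating set. -/
def InDom (T : Tournament) (S : Finset T.V) : Prop :=
  ∀ u, u ∉ S → ∃ v ∈ S, T.arc u v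

/-- `S` is an out-dominating set. -/
def OutDom (T : Tournament) (S : Finset T.V) : Prop :=
  ∀ u, u ∉ S → ∃ v ∈ S, T.arc v u

/-- The in-domination number. -/
def inDomNum (T : Tournament) : ℕ := sInf {n | ∃ S : Finset T.V, T.InDom S ∧ S.card = n}

/-- The out-domination number. -/
def outDomNum (T : Tournament) : ℕ := sInf {n | ∃ S : Finset T.V, T.OutDom S ∧ S.card = n}

end Tournament

open Tournament

/-!
Sending the nodes of a set `S` to their clones and the others to themselves reverses exactly the
arcs inside `S`. Any injection of `J` into a tournament `K` can therefore be corrected one node at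
a time: applying this to a node `a` together with all nodes on whose arc to `a` the two tournaments
differ repairs every arc at `a`, and it disturbs no arc at the nodes repaired before, as none of
them lies in that set. So `n` extensions suffice once `K` has at least `n` nodes, and
`⌈log₂ n⌉` doublings of a nonempty tournament provide these.
-/

namespace Tournament

/-- The injection into the dual ILTT extension that follows `f` but sends the elements of `S` to
clones; it serves to reverse the arcs inside `S`. -/
def cloneOn {α : Type*} {K : Tournament} (f : α ↪ K.V) (S : Set α) : α ↪ K.ILTTd.V where
  toFun u := if u ∈ S then Sum.inr (f u) else Sum.inl (f u)
  inj' u v huv := by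
    by_cases hu : u ∈ S <;> by_cases hv : v ∈ S <;> simp only [hu, hv, ↓reduceIte] at huv
    · exact f.injective (Sum.inr_injective huv)
    · exact absurd huv Sum.inr_ne_inl
    · exact absurd huv Sum.inl_ne_inr
    · exact f.injective (Sum.inl_injective huv)

section cloneOn

variable {α : Type*} {K : Tournament} (f : α ↪ K.V) {S : Set α} {u v : α}

theorem cloneOn_of_mem (hu : u ∈ S) : cloneOn f S u = Sum.inr (f u) :=
  if_pos hu

theorem cloneOn_of_notMem (hu : u ∉ S) : cloneOn f S u = Sum.inl (f u) :=
  if_neg hu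

theorem arc_cloneOn_of_mem (hu : u ∈ S) (hv : v ∈ S) :
    K.ILTTd.arc (cloneOn f S u) (cloneOn f S v) ↔ K.arc (f v) (f u) := by
  rw [cloneOn_of_mem f hu, cloneOn_of_mem f hv]
  rfl

theorem arc_cloneOn_of_notMem (h : ¬(u ∈ S ∧ v ∈ S)) :
    K.ILTTd.arc (cloneOn f S u) (cloneOn f S v) ↔ K.arc (f u) (f v) := by
  by_cases hu : u ∈ S
  · have hv : v ∉ S := fun hv => h ⟨hu, hv⟩
    have hne : f u ≠ f v := f.injective.ne (ne_of_mem_of_not_mem hu hv)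
    rw [cloneOn_of_mem f hu, cloneOn_of_notMem f hv]
    exact or_iff_left hne
  · by_cases hv : v ∈ S
    · rw [cloneOn_of_notMem f hu, cloneOn_of_mem f hv]
      rfl
    · rw [cloneOn_of_notMem f hu, cloneOn_of_notMem f hv]
      rfl

end cloneOn

variable {J K : Tournament}

/-- The injection `f` respects the direction of the arc between `u` and `v`; an injection with this
property for all pairs exhibits a subtournament. -/
def PreservesArc (f : J.V ↪ K.V) (u v : J.V) : Prop :=
  J.arc u v ↔ K.arc (f u) (f v)

theorem preservesArc_self (f : J.V ↪ K.V) (u : J.V) : PreservesArc f u u :=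
  iff_of_false (J.irrefl u) (K.irrefl (f u))

theorem PreservesArc.symm {f : J.V ↪ K.V} {u v : J.V} (h : PreservesArc f u v) :
    PreservesArc f v u := by
  obtain rfl | hvu := eq_or_ne v u
  · exact h
  · calc J.arc v u ↔ ¬ J.arc u v := J.exactlyOne v u hvu
      _ ↔ ¬ K.arc (f u) (f v) := not_congr h
      _ ↔ K.arc (f v) (f u) := (K.exactlyOne _ _ (f.injective.ne hvu)).symm

theorem PreservesArc.cloneOn {f : J.V ↪ K.V} {S : Set J.V} {u v : J.V} (h : PreservesArc f u v)
    (hS : ¬(u ∈ S ∧ v ∈ S)) : PreservesArc (cloneOn f S) u v :=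
  h.trans (arc_cloneOn_of_notMem f hS).symm

theorem preservesArc_cloneOn_of_not {f : J.V ↪ K.V} {S : Set J.V} {u v : J.V}
    (h : ¬PreservesArc f u v) (hu : u ∈ S) (hv : v ∈ S) : PreservesArc (cloneOn f S) u v := by
  have huv : u ≠ v := fun huv => h (huv ▸ preservesArc_self f u)
  calc J.arc u v ↔ ¬ K.arc (f u) (f v) := (not_iff_comm.mp (not_iff.mp h)).symm
    _ ↔ K.arc (f v) (f u) := (K.exactlyOne _ _ (f.injective.ne huv.symm)).symm
    _ ↔ K.ILTTd.arc (cloneOn f S u) (cloneOn f S v) :=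
      (arc_cloneOn_of_mem f hu hv).symm

theorem exists_preservesArc_ILTTd (f : J.V ↪ K.V) (a : J.V) :
    ∃ g : J.V ↪ K.ILTTd.V, (∀ v, PreservesArc g a v) ∧
      ∀ u, (∀ v, PreservesArc f u v) → ∀ v, PreservesArc g u v := by
  let S : Set J.V := insert a {v | ¬PreservesArc f a v}
  have repaired : ∀ v, PreservesArc (cloneOn f S) a v := by
    intro v
    obtain rfl | hva := eq_or_ne v a
    · exact preservesArc_self _ v
    by_cases hv : PreservesArc f a v
    · have hvS : v ∉ S := fun h => h.elim hva fun h => h hv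
      exact hv.cloneOn fun h => hvS h.2
    · exact preservesArc_cloneOn_of_not hv (Set.mem_insert a _) (Set.mem_insert_of_mem a hv)
  refine ⟨cloneOn f S, repaired, fun u hu => ?_⟩
  obtain rfl | hua := eq_or_ne u a
  · exact repaired
  · have huS : u ∉ S := fun h => h.elim hua fun h => h (hu a).symm
    exact fun v => (hu v).cloneOn fun h => huS h.1

theorem isSubtournament_iterate_ILTTd_of_preservesArc (f : J.V ↪ K.V) (s : Finset J.V)
    (hf : ∀ u ∉ s, ∀ v, PreservesArc f u v) : J.IsSubtournament (ILTTd^[s.card] K) := by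
  induction s using Finset.induction_on generalizing K with
  | empty => exact ⟨f, f.injective, fun u => hf u (Finset.notMem_empty u)⟩
  | insert a s ha ih =>
    obtain ⟨g, hga, hg⟩ := exists_preservesArc_ILTTd f a
    rw [Finset.card_insert_of_notMem ha, Function.iterate_succ_apply]
    refine ih g fun u hu => ?_
    obtain rfl | hua := eq_or_ne u a
    · exact hga
    · exact hg u (hf u (Finset.mem_insert.not.mpr (not_or.mpr ⟨hua, hu⟩)))

theorem isSubtournament_iterate_ILTTd_of_card_le (h : Fintype.card J.V ≤ Fintype.card K.V) :
    J.IsSubtournament (ILTTd^[Fintype.card J.V] K) := by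
  obtain ⟨f⟩ := Function.Embedding.nonempty_of_card_le h
  exact isSubtournament_iterate_ILTTd_of_preservesArc f Finset.univ
    fun u hu => absurd (Finset.mem_univ u) hu

theorem card_iterate_ILTTd (G : Tournament) (k : ℕ) :
    Fintype.card (ILTTd^[k] G).V = 2 ^ k * Fintype.card G.V := by
  induction k with
  | zero => exact (one_mul _).symm
  | succ k ih =>
    rw [Function.iterate_succ_apply', pow_succ', mul_assoc, ← ih, two_mul]
    exact Fintype.card_sum

end Tournament

theorem clog_two_le_choose_two (n : ℕ) : Nat.clog 2 n ≤ n.choose 2 := by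
  cases n with
  | zero => simp
  | succ k =>
    refine Nat.clog_le_of_le_pow ?_
    calc k + 1 ≤ 2 ^ k := Nat.lt_two_pow_self
      _ ≤ 2 ^ (k + 1).choose 2 := by
        gcongr
        · exact one_le_two
        · simp [Nat.choose_succ_succ' k 1]

theorem stmt13_general (G : Tournament) [Nonempty G.V] (J : Tournament) :
    J.IsSubtournament (ILTTd^[Fintype.card J.V + Nat.clog 2 (Fintype.card J.V)] G) := by
  rw [Function.iterate_add_apply]
  apply isSubtournament_iterate_ILTTd_of_card_le
  calc Fintype.card J.V ≤ 2 ^ Nat.clog 2 (Fintype.card J.V) := Nat.le_pow_clog one_lt_two _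
    _ ≤ 2 ^ Nat.clog 2 (Fintype.card J.V) * Fintype.card G.V :=
      Nat.le_mul_of_pos_right _ Fintype.card_pos
    _ = Fintype.card (ILTTd^[Nat.clog 2 (Fintype.card J.V)] G).V :=
      (card_iterate_ILTTd G _).symm

/-- Universality of ILTT_d: for a nonempty tournament `G` and any
tournament `J` of order `n ≥ 1`, there is `r ≤ n + C(n,2)` such that `J` is
isomorphic to a subtournament of `ILTT_d^r(G)`. -/
theorem stmt13 (G : Tournament) (hne : Nonempty G.V) (J : Tournament)
    (n : ℕ) (hn : Fintype.card J.V = n) (hn1 : 1 ≤ n) :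
    ∃ r : ℕ, r ≤ n + Nat.choose n 2 ∧
      J.IsSubtournament (Tournament.ILTTd^[r] G) := by
  subst hn
  exact ⟨_, Nat.add_le_add_left (clog_two_le_choose_two _) _, stmt13_general G J⟩
end
end

section
/- Let G be a Hamiltonian tournament of order at least 3. Then for every integer t ≥ 1, both ILTT^t(G) and ILTT_d^t(G) are Hamiltonian. -/
open scoped Classical

noncomputable section

open Tournament

/-!
If `x₀ → x₁ → ⋯ → x₀` is a Hamiltonian cycle of `G`, then `x₀' → x₀ → x₁' → x₁ → ⋯ → x₀'` is one of
both extensions: it uses only arcs from a clone to its original and from an original to a clone,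
which the two constructions share. The argument is iterated `t` times.

A Hamiltonian cycle is handled through its successor permutation `σ`; the new successor permutation
squares to `σ ⊕ σ`, so it is transitive as soon as `σ` is.
-/

open Equiv

section Perm

variable {α : Type*}

/-- Turns a cyclic order `x₀, x₁, …` on `α`, given by its successor map `σ`, into the cyclic order
`x₀', x₀, x₁', x₁, …` on `α ⊕ α`, where `x' = Sum.inr x` is the clone of `x = Sum.inl x`. -/
def insertClones (σ : Perm α) : Perm (α ⊕ α) :=
  (sumComm α α).trans (Perm.sumCongr 1 σ)

@[simp]
theorem insertClones_inl (σ : Perm α) (x : α) : insertClones σ (Sum.inl x) = Sum.inr (σ x) :=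
  rfl

@[simp]
theorem insertClones_inr (σ : Perm α) (x : α) : insertClones σ (Sum.inr x) = Sum.inl x :=
  rfl

theorem insertClones_sq (σ : Perm α) : insertClones σ ^ 2 = σ.sumCongr σ := by
  ext (x | x) <;> simp [sq]

theorem sameCycle_insertClones_inl {σ : Perm α} {x y : α} (h : σ.SameCycle x y) :
    (insertClones σ).SameCycle (Sum.inl x) (Sum.inl y) := by
  obtain ⟨k, rfl⟩ := h
  have hpow : σ.sumCongr σ ^ k = (σ ^ k).sumCongr (σ ^ k) :=
    (map_zpow (Perm.sumCongrHom α α) (σ, σ) k).symm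
  refine Perm.SameCycle.of_pow (n := 2) ⟨k, ?_⟩
  rw [insertClones_sq, hpow, Perm.sumCongr_apply, Sum.map_inl]

theorem isCycleOn_insertClones {σ : Perm α} (hσ : σ.IsCycleOn Set.univ) :
    (insertClones σ).IsCycleOn Set.univ := by
  have to_inl (u : α ⊕ α) : ∃ x, (insertClones σ).SameCycle u (Sum.inl x) := by
    rcases u with x | x
    · exact ⟨x, .rfl⟩
    · exact ⟨x, 1, rfl⟩
  refine ⟨Set.bijOn_univ.2 (insertClones σ).bijective, fun u _ v _ => ?_⟩
  obtain ⟨x, hux⟩ := to_inl u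
  obtain ⟨y, hvy⟩ := to_inl v
  have hxy : σ.SameCycle x y := hσ.2 trivial trivial
  exact hux.trans ((sameCycle_insertClones_inl hxy).trans hvy.symm)

theorem isCycleOn_univ_of_semiconj_add_one {n : ℕ} [NeZero n] {f : ZMod n → α} {σ : Perm α}
    (hf : Function.Surjective f) (hσ : Function.Semiconj f (· + 1) σ) :
    σ.IsCycleOn Set.univ := by
  refine ⟨Set.bijOn_univ.2 σ.bijective, fun x _ y _ => ?_⟩
  obtain ⟨i, rfl⟩ := hf x
  obtain ⟨j, rfl⟩ := hf y
  have hpow : (σ ^ (j - i).val) (f i) = f j := by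
    rw [← Perm.iterate_eq_pow, ← hσ.iterate_right, add_right_iterate, nsmul_one,
      ZMod.natCast_zmod_val]
    exact congrArg f (add_sub_cancel i j)
  exact ⟨(j - i).val, by rwa [zpow_natCast]⟩

theorem exists_zmod_equiv_semiconj_of_isCycleOn_univ [Fintype α] [Nonempty α] {σ : Perm α}
    (hσ : σ.IsCycleOn Set.univ) :
    ∃ f : ZMod (Fintype.card α) ≃ α, Function.Semiconj f (· + 1) σ := by
  obtain ⟨x⟩ := ‹Nonempty α›
  have : NeZero (Fintype.card α) := ⟨Fintype.card_ne_zero⟩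
  rw [← Finset.coe_univ] at hσ
  have pow_congr {m k : ℕ} (h : (m : ZMod (Fintype.card α)) = k) : (σ ^ m) x = (σ ^ k) x :=
    (hσ.pow_apply_eq_pow_apply (Finset.mem_univ x)).2 ((ZMod.natCast_eq_natCast_iff m k _).1 h)
  have hsurj : Function.Surjective fun i : ZMod (Fintype.card α) => (σ ^ i.val) x := fun y => by
    obtain ⟨k, -, hk⟩ := hσ.exists_pow_eq (Finset.mem_univ x) (Finset.mem_univ y)
    exact ⟨k, (pow_congr (ZMod.natCast_zmod_val _)).trans hk⟩
  have hbij := (Fintype.bijective_iff_surjective_and_card _).2 ⟨hsurj, ZMod.card _⟩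
  refine ⟨Equiv.ofBijective _ hbij, fun i => ?_⟩
  calc (σ ^ (i + 1).val) x = (σ ^ (i.val + 1)) x := pow_congr (by simp)
    _ = σ ((σ ^ i.val) x) := by rw [pow_succ', Perm.mul_apply]

end Perm

section SpanningCycle

variable {α : Type*}

/-- A directed cycle of the relation `r` through all points, encoded by the permutation `σ` sending
each point to the next one on the cycle. -/
structure IsSpanningCycle (r : α → α → Prop) (σ : Perm α) : Prop where
  isCycleOn : σ.IsCycleOn Set.univ
  rel_apply : ∀ x, r x (σ x)

theorem IsSpanningCycle.insertClones {r : α → α → Prop} {σ : Perm α} (hσ : IsSpanningCycle r σ)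
    {s : α ⊕ α → α ⊕ α → Prop} (inr_inl : ∀ x, s (Sum.inr x) (Sum.inl x))
    (inl_inr : ∀ x y, r x y → s (Sum.inl x) (Sum.inr y)) :
    IsSpanningCycle s (insertClones σ) where
  isCycleOn := isCycleOn_insertClones hσ.isCycleOn
  rel_apply
    | .inl x => inl_inr x (σ x) (hσ.rel_apply x)
    | .inr x => inr_inl x

end SpanningCycle

namespace Tournament

-- Nonemptiness is a separate condition because `ZMod 0 = ℤ`: the empty tournament is not
-- Hamiltonian, while its only permutation is a spanning cycle.
theorem isHamiltonian_iff {T : Tournament} :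
    T.IsHamiltonian ↔ Nonempty T.V ∧ ∃ σ, IsSpanningCycle T.arc σ := by
  constructor
  · rintro ⟨f, hf⟩
    have hne : Nonempty T.V := ⟨f 0⟩
    have : NeZero (Fintype.card T.V) := ⟨Fintype.card_ne_zero⟩
    have hsemi : Function.Semiconj f (· + 1) (f.permCongr (Equiv.addRight 1)) := fun i => by simp
    refine ⟨hne, _, isCycleOn_univ_of_semiconj_add_one f.surjective hsemi, ?_⟩
    exact f.surjective.forall.2 fun i => hsemi i ▸ hf i
  · rintro ⟨_, σ, hσ⟩
    obtain ⟨f, hf⟩ := exists_zmod_equiv_semiconj_of_isCycleOn_univ hσ.isCycleOn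
    exact ⟨f, fun i => hf i ▸ hσ.rel_apply (f i)⟩

theorem IsHamiltonian.ILTT {T : Tournament} (hT : T.IsHamiltonian) : T.ILTT.IsHamiltonian := by
  obtain ⟨hne, σ, hσ⟩ := isHamiltonian_iff.1 hT
  exact isHamiltonian_iff.2
    ⟨hne.map Sum.inl, _, hσ.insertClones (fun _ => .inr rfl) fun _ _ h => h⟩

theorem IsHamiltonian.ILTTd {T : Tournament} (hT : T.IsHamiltonian) : T.ILTTd.IsHamiltonian := by
  obtain ⟨hne, σ, hσ⟩ := isHamiltonian_iff.1 hT
  exact isHamiltonian_iff.2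
    ⟨hne.map Sum.inl, _, hσ.insertClones (fun _ => .inr rfl) fun _ _ h => h⟩

end Tournament

/-- If `G` is a Hamiltonian tournament of order at least 3, then
for every `t ≥ 1` both `ILTT^t(G)` and `ILTT_d^t(G)` are Hamiltonian. -/
theorem stmt14 (G : Tournament) (hcard : 3 ≤ Fintype.card G.V)
    (hHam : G.IsHamiltonian) :
    ∀ t : ℕ, 1 ≤ t → (Tournament.ILTT^[t] G).IsHamiltonian ∧
      (Tournament.ILTTd^[t] G).IsHamiltonian := by
  exact fun t _ => ⟨Function.Iterate.rec IsHamiltonian hHam (fun _ => IsHamiltonian.ILTT) t,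
    Function.Iterate.rec IsHamiltonian hHam (fun _ => IsHamiltonian.ILTTd) t⟩
end
end

section
/- Let G be a tournament of order at least 3. Then: (1) for every t ≥ 1, ILTT^t(G) is Hamiltonian if and only if G is strong; and (2) if G has no sink, then for every t ≥ 1, ILTT_d^t(G) is Hamiltonian. -/
open scoped Classical

noncomputable section

open Tournament

/-!
A tournament with at least two nodes is Hamiltonian exactly when it is strong (Camion). The point is
that in a strong tournament a longest directed cycle `c` misses no node. If a node outside `c` has
both an in-neighbour and an out-neighbour on `c`, it fits between two consecutive nodes of `c`.
Otherwise every outside node dominates `c` or is dominated by it, and strength gives an arc from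
a dominated node to a dominating one, both of whose ends can be inserted into `c` at once.

Sending clones to their originals shows that `ILTT` preserves and reflects strength. In the dual
extension, if `x` has no arc to `y ≠ x`, then `x` still reaches `y`: an out-neighbour `z` of `x`
gives the walk `x → z' → x' → y' → y`. So the dual extension of any tournament without a sink is
strong.
-/

section ReflTransGen

open Relation

variable {α : Type*} {r : α → α → Prop}

lemma exists_mem_rel_notMem_of_reflTransGen {s : Set α} {a b : α} (h : ReflTransGen r a b)
    (ha : a ∈ s) (hb : b ∉ s) : ∃ x ∈ s, ∃ y ∉ s, r x y := by
  induction h with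
  | refl => exact absurd ha hb
  | @tail c d _ hcd ih =>
    by_cases hc : c ∈ s
    · exact ⟨c, hc, d, hb, hcd⟩
    · exact ih hc

lemma reflTransGen_of_forall_rel_add_one {n : ℕ} [NeZero n] {f : ZMod n → α}
    (h : ∀ i, r (f i) (f (i + 1))) (i j : ZMod n) : ReflTransGen r (f i) (f j) := by
  have hstep (k : ℕ) : ReflTransGen r (f (i + k)) (f (i + (k + 1 : ℕ))) := by
    rw [Nat.cast_succ, ← add_assoc]
    exact .single (h _)
  simpa using Nat.rel_of_forall_rel_succ_of_le (ReflTransGen r) hstep (Nat.zero_le (j - i).val)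

end ReflTransGen

section Cycle

variable {α : Type*} {c : Cycle α}

lemma exists_cycle_eq_coe_cons_of_mem {a : α} (ha : a ∈ c) : ∃ l : List α, c = ↑(a :: l) := by
  induction c using Quotient.inductionOn with
  | h l =>
    obtain ⟨s, t, rfl⟩ := List.append_of_mem ha
    exact ⟨t ++ s, Cycle.coe_eq_coe.mpr (List.isRotated_append (l := s) (l' := a :: t))⟩

lemma exists_cycle_eq_coe_cons_cons_of_mem {p : α → Prop} (hp : ∃ a ∈ c, p a)
    (hnp : ∃ b ∈ c, ¬ p b) : ∃ (x y : α) (l : List α), c = ↑(x :: y :: l) ∧ p x ∧ ¬ p y := by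
  obtain ⟨a, hac, ha⟩ := hp
  obtain ⟨b, hbc, hb⟩ := hnp
  obtain ⟨l, rfl⟩ := exists_cycle_eq_coe_cons_of_mem hac
  have hbl : b ∈ l := (List.mem_cons.mp hbc).resolve_left fun hba => hb (hba ▸ ha)
  have hswitch : ¬ (a :: l).IsChain (fun x y => p x → p y) := fun hchain =>
    hb (hchain.cons_induction p l (fun _ _ hxy => hxy) ha b hbl)
  rw [List.isChain_iff_forall_rel_of_append_cons_cons] at hswitch
  push Not at hswitch
  obtain ⟨x, y, s, t, hl, hx, hy⟩ := hswitch
  refine ⟨x, y, t ++ s, ?_, hx, hy⟩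
  rw [hl]
  exact Cycle.coe_eq_coe.mpr (List.isRotated_append (l := s) (l' := x :: y :: t))

lemma rel_get_get_add_one_of_cycle_chain {r : α → α → Prop} {a : α} {l : List α}
    (h : Cycle.Chain r ↑(a :: l)) (i : Fin (l.length + 1)) :
    r ((a :: l).get i) ((a :: l).get (i + 1)) := by
  have hchain := List.isChain_iff_getElem.mp ((Cycle.chain_coe_cons r a l).mp h)
  have hget {k : ℕ} (hk : k < (a :: l).length) :
      (a :: (l ++ [a]))[k]'(by grind) = (a :: l)[k] :=
    List.getElem_append_left (as := a :: l) hk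
  induction i using Fin.lastCases with
  | last => simpa [hget] using hchain l.length (by simp)
  | cast i => simpa [hget, i.isLt.le] using hchain i (by simp)

end Cycle

namespace Tournament

open Relation

variable {T : Tournament}

lemma ne_of_arc {x y : T.V} (h : T.arc x y) : x ≠ y :=
  fun hxy => T.irrefl y (hxy ▸ h)

lemma not_arc_of_arc {x y : T.V} (h : T.arc x y) : ¬ T.arc y x :=
  (T.exactlyOne x y (ne_of_arc h)).mp h

lemma arc_of_not_arc {x y : T.V} (hne : x ≠ y) (h : ¬ T.arc x y) : T.arc y x :=
  (T.exactlyOne y x hne.symm).mpr h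

lemma Strong.exists_arc_to [Nontrivial T.V] (hT : T.Strong) (x : T.V) : ∃ y, T.arc x y := by
  obtain ⟨z, hz⟩ := exists_ne x
  obtain ⟨_, rfl, y, -, hxy⟩ := exists_mem_rel_notMem_of_reflTransGen (s := {x}) (hT x z) rfl hz
  exact ⟨y, hxy⟩

lemma Strong.exists_arc_from [Nontrivial T.V] (hT : T.Strong) (x : T.V) : ∃ y, T.arc y x := by
  obtain ⟨z, hz⟩ := exists_ne x
  obtain ⟨y, -, w, hw, hyw⟩ :=
    exists_mem_rel_notMem_of_reflTransGen (s := {x}ᶜ) (hT z x) hz (not_not.mpr rfl)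
  exact ⟨y, not_not.mp hw ▸ hyw⟩

/-- A directed cycle of a tournament: distinct nodes in cyclic order, each with an arc to the next.
The empty cycle is allowed; all others have length at least three. -/
def IsDirectedCycle (T : Tournament) (c : Cycle T.V) : Prop :=
  c.Nodup ∧ c.Chain T.arc

lemma Strong.exists_isDirectedCycle_length_eq_three [Nontrivial T.V] (hT : T.Strong) :
    ∃ c, T.IsDirectedCycle c ∧ c.length = 3 := by
  obtain ⟨x⟩ : Nonempty T.V := inferInstance
  obtain ⟨y, hxy⟩ := hT.exists_arc_to x
  obtain ⟨p, hxp, q, hxq, hpq⟩ := exists_mem_rel_notMem_of_reflTransGen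
    (s := {z | T.arc x z}) (hT y x) hxy (T.irrefl x)
  have hne : x ≠ q := fun h => not_arc_of_arc hxp (h ▸ hpq)
  have hqx : T.arc q x := arc_of_not_arc hne hxq
  refine ⟨↑[x, p, q], ⟨?_, ?_⟩, rfl⟩
  · simp [ne_of_arc hxp, ne_of_arc hpq, hne]
  · simpa [Cycle.chain_coe_cons] using ⟨hxp, hpq, hqx⟩

namespace IsDirectedCycle

variable {c : Cycle T.V}

lemma exists_insert_node (hc : T.IsDirectedCycle c) {v : T.V} (hv : v ∉ c)
    (hin : ∃ x ∈ c, T.arc x v) (hout : ∃ y ∈ c, T.arc v y) :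
    ∃ c', T.IsDirectedCycle c' ∧ c.length < c'.length := by
  obtain ⟨x, y, l, rfl, hxv, hyv⟩ := exists_cycle_eq_coe_cons_cons_of_mem hin
    (hout.imp fun _ h => ⟨h.1, not_arc_of_arc h.2⟩)
  obtain ⟨hnodup, hchain⟩ := hc
  have hvy : T.arc v y := arc_of_not_arc (fun h => hv (by simp [h])) hyv
  refine ⟨↑(x :: v :: y :: l), ⟨?_, ?_⟩, by simp⟩
  · simp_all [eq_comm]
  · exact .cons_cons hxv (.cons_cons hvy hchain.tail)

lemma exists_insert_arc (hc : T.IsDirectedCycle c) {v w : T.V} (hv : v ∉ c) (hw : w ∉ c)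
    (hvw : T.arc v w) (hin : ∃ x ∈ c, T.arc x v) (hout : ∀ y ∈ c, T.arc w y) :
    ∃ c', T.IsDirectedCycle c' ∧ c.length < c'.length := by
  obtain ⟨x, hx, hxv⟩ := hin
  obtain ⟨l, rfl⟩ := exists_cycle_eq_coe_cons_of_mem hx
  obtain ⟨hnodup, hchain⟩ := hc
  have hwl : List.IsChain T.arc (w :: (l ++ [x])) := by
    refine hchain.tail.cons fun y hy => hout y ?_
    have hyl := List.mem_of_mem_head? hy
    simp_all [or_comm]
  have hne := ne_of_arc hvw
  refine ⟨↑(x :: v :: w :: l), ⟨?_, ?_⟩, by simp⟩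
  · simp_all [eq_comm]
  · exact .cons_cons hxv (.cons_cons hvw hwl)

lemma exists_length_lt (hc : T.IsDirectedCycle c) (hT : T.Strong) {a w : T.V} (ha : a ∈ c)
    (hw : w ∉ c) : ∃ c', T.IsDirectedCycle c' ∧ c.length < c'.length := by
  by_cases hmixed : ∃ v ∉ c, (∃ x ∈ c, T.arc x v) ∧ ∃ y ∈ c, T.arc v y
  · obtain ⟨v, hv, hin, hout⟩ := hmixed
    exact hc.exists_insert_node hv hin hout
  push Not at hmixed
  let dominated : Set T.V := {v | v ∉ c ∧ ∃ x ∈ c, T.arc x v}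
  obtain ⟨x, hx, v₀, hv₀, hxv₀⟩ :=
    exists_mem_rel_notMem_of_reflTransGen (s := {v | v ∈ c}) (hT a w) ha hw
  obtain ⟨v, ⟨hv, hin⟩, u, hu, hvu⟩ := exists_mem_rel_notMem_of_reflTransGen (s := dominated)
    (hT v₀ a) ⟨hv₀, x, hx, hxv₀⟩ (fun h => h.1 ha)
  have huc : u ∉ c := fun huc => hmixed v hv hin u huc hvu
  have hout : ∀ y ∈ c, T.arc u y := fun y hy =>
    arc_of_not_arc (fun h => huc (h ▸ hy)) (fun hyu => hu ⟨huc, y, hy, hyu⟩)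
  exact hc.exists_insert_arc hv huc hvu hin hout

lemma isHamiltonian [Nonempty T.V] (hc : T.IsDirectedCycle c) (hmem : ∀ v, v ∈ c) :
    T.IsHamiltonian := by
  obtain ⟨a⟩ : Nonempty T.V := inferInstance
  obtain ⟨l, rfl⟩ := exists_cycle_eq_coe_cons_of_mem (hmem a)
  let e : Fin (l.length + 1) ≃ T.V := List.Nodup.getEquivOfForallMemList (a :: l) hc.1 hmem
  have hcard : l.length + 1 = Fintype.card T.V := by simpa using Fintype.card_congr e
  rw [IsHamiltonian, ← hcard]
  -- `ZMod (n + 1)` unfolds to `Fin (n + 1)`.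
  exact ⟨e, rel_get_get_add_one_of_cycle_chain hc.2⟩

end IsDirectedCycle

lemma Strong.exists_isDirectedCycle_forall_mem [Nontrivial T.V] (hT : T.Strong) :
    ∃ c, T.IsDirectedCycle c ∧ ∀ v, v ∈ c := by
  have hfin : {c | T.IsDirectedCycle c}.Finite :=
    (Set.finite_coe_iff.mp (Finite.of_fintype {c : Cycle T.V // c.Nodup})).subset
      fun _ hc => hc.1
  obtain ⟨c₃, hc₃, hlen₃⟩ := hT.exists_isDirectedCycle_length_eq_three
  obtain ⟨c, hc, hmax⟩ := Set.exists_max_image _ Cycle.length hfin ⟨c₃, hc₃⟩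
  obtain ⟨a, ha⟩ : ∃ a, a ∈ c := by
    induction c with
    | nil => simpa [hlen₃] using hmax c₃ hc₃
    | cons a l => exact ⟨a, by simp⟩
  refine ⟨c, hc, fun w => ?_⟩
  by_contra hw
  obtain ⟨c', hc', hlt⟩ := hc.exists_length_lt hT ha hw
  exact hlt.not_ge (hmax c' hc')

lemma IsHamiltonian.strong (h : T.IsHamiltonian) : T.Strong := by
  obtain ⟨f, hf⟩ := h
  intro u v
  have : NeZero (Fintype.card T.V) := ⟨(Fintype.card_pos_iff.mpr ⟨u⟩).ne'⟩
  simpa using reflTransGen_of_forall_rel_add_one hf (f.symm u) (f.symm v)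

theorem isHamiltonian_iff_strong [Nontrivial T.V] : T.IsHamiltonian ↔ T.Strong := by
  refine ⟨IsHamiltonian.strong, fun hT => ?_⟩
  obtain ⟨c, hc, hmem⟩ := hT.exists_isDirectedCycle_forall_mem
  exact hc.isHamiltonian hmem

instance [Nonempty T.V] : Nontrivial T.ILTT.V :=
  have ⟨x⟩ : Nonempty T.V := inferInstance
  ⟨Sum.inl x, Sum.inr x, Sum.inl_ne_inr⟩

instance [Nonempty T.V] : Nontrivial T.ILTTd.V :=
  have ⟨x⟩ : Nonempty T.V := inferInstance
  ⟨Sum.inl x, Sum.inr x, Sum.inl_ne_inr⟩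

lemma Strong.of_ILTT (h : T.ILTT.Strong) : T.Strong := by
  intro u v
  have hproj : ∀ x y : T.ILTT.V, T.ILTT.arc x y →
      ReflTransGen T.arc (Sum.elim id id x) (Sum.elim id id y) := by
    rintro (x | x) (y | y) hxy
    · exact .single hxy
    · exact .single hxy
    · rcases hxy with hxy | rfl
      · exact .single hxy
      · exact .refl
    · exact .single hxy
  exact ReflTransGen.lift' (Sum.elim id id) hproj _ _ (h (Sum.inl u) (Sum.inl v))

lemma Strong.ILTT [Nontrivial T.V] (h : T.Strong) : T.ILTT.Strong := by
  have horig (x y : T.V) : ReflTransGen T.ILTT.arc (Sum.inl x) (Sum.inl y) :=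
    ReflTransGen.lift (p := T.ILTT.arc) Sum.inl (fun _ _ hxy => hxy) _ _ (h x y)
  have hto_orig : ∀ u : T.ILTT.V, ∃ x : T.V, ReflTransGen T.ILTT.arc u (Sum.inl x) := by
    rintro (x | x)
    · exact ⟨x, .refl⟩
    · exact ⟨x, .single (Or.inr rfl)⟩
  have hfrom_orig : ∀ v : T.ILTT.V, ∃ x : T.V, ReflTransGen T.ILTT.arc (Sum.inl x) v := by
    rintro (y | y)
    · exact ⟨y, .refl⟩
    · obtain ⟨x, hxy⟩ := h.exists_arc_from y
      exact ⟨x, .single hxy⟩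
  intro u v
  obtain ⟨x, hux⟩ := hto_orig u
  obtain ⟨y, hyv⟩ := hfrom_orig v
  exact (hux.trans (horig x y)).trans hyv

theorem isHamiltonian_iterate_ILTT_iff [Nontrivial T.V] (t : ℕ) :
    (Tournament.ILTT^[t] T).IsHamiltonian ↔ T.Strong := by
  induction t generalizing T with
  | zero => exact isHamiltonian_iff_strong (T := T)
  | succ t ih =>
    rw [Function.iterate_succ_apply]
    exact ih.trans ⟨Strong.of_ILTT, Strong.ILTT⟩

lemma exists_arc_to_ILTTd (h : ∀ x : T.V, ∃ y, T.arc x y) : ∀ u, ∃ v, T.ILTTd.arc u v := by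
  rintro (x | x)
  · obtain ⟨y, hxy⟩ := h x
    exact ⟨Sum.inl y, hxy⟩
  · exact ⟨Sum.inl x, Or.inr rfl⟩

lemma strong_ILTTd (h : ∀ x : T.V, ∃ y, T.arc x y) : T.ILTTd.Strong := by
  have hdown (x : T.V) : ReflTransGen T.ILTTd.arc (Sum.inr x) (Sum.inl x) :=
    .single (Or.inr rfl)
  have hup (x : T.V) : ReflTransGen T.ILTTd.arc (Sum.inl x) (Sum.inr x) := by
    obtain ⟨y, hxy⟩ := h x
    exact .head (b := Sum.inr y) hxy (.single hxy)
  have horig (x y : T.V) : ReflTransGen T.ILTTd.arc (Sum.inl x) (Sum.inl y) := by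
    by_cases hxy : T.arc x y
    · exact .single hxy
    rcases eq_or_ne x y with rfl | hne
    · exact .refl
    · have hclone : T.ILTTd.arc (Sum.inr x) (Sum.inr y) := arc_of_not_arc (T := T) hne hxy
      exact ((hup x).tail hclone).trans (hdown y)
  rintro (x | x) (y | y)
  · exact horig x y
  · exact (horig x y).trans (hup y)
  · exact (hdown x).trans (horig x y)
  · exact ((hdown x).trans (horig x y)).trans (hup y)

theorem isHamiltonian_iterate_ILTTd [Nonempty T.V] (h : ∀ x : T.V, ∃ y, T.arc x y) {t : ℕ}
    (ht : 1 ≤ t) : (Tournament.ILTTd^[t] T).IsHamiltonian := by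
  induction t, ht using Nat.le_induction generalizing T with
  | base => exact isHamiltonian_iff_strong (T := T.ILTTd) |>.mpr (strong_ILTTd h)
  | succ t _ ih =>
    rw [Function.iterate_succ_apply]
    exact ih (exists_arc_to_ILTTd h)

end Tournament

/-- For a tournament `G` of order at least 3: (1) for every `t ≥ 1`,
`ILTT^t(G)` is Hamiltonian iff `G` is strong; (2) if `G` has no sink then
`ILTT_d^t(G)` is Hamiltonian for every `t ≥ 1`. -/
theorem stmt15 (G : Tournament) (hcard : 3 ≤ Fintype.card G.V) :
    (∀ t : ℕ, 1 ≤ t → ((Tournament.ILTT^[t] G).IsHamiltonian ↔ G.Strong)) ∧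
    ((∀ x : G.V, ∃ y : G.V, G.arc x y) →
      ∀ t : ℕ, 1 ≤ t → (Tournament.ILTTd^[t] G).IsHamiltonian) := by
  have : Nontrivial G.V := Fintype.one_lt_card_iff_nontrivial.mp (by omega)
  exact ⟨fun t _ => isHamiltonian_iterate_ILTT_iff t,
    fun h _ ht => isHamiltonian_iterate_ILTTd h ht⟩
end
end

section
/- Let A be the (complex) adjacency matrix of a tournament G on n nodes, and let B be the 2n × 2n block matrix B = [[A, A], [I + A, A]] (the adjacency matrix of ILTT(G), listing the original nodes first and then their clones). Then −1/2 is not an eigenvalue of B. -/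
/-- `A` is the adjacency matrix of a tournament: zero diagonal, and for distinct
`i, j` exactly one of `A i j`, `A j i` equals 1 and the other equals 0. -/
def IsTournamentAdjMatrix {n : ℕ} (A : Matrix (Fin n) (Fin n) ℂ) : Prop :=
  (∀ i, A i i = 0) ∧
    ∀ i j, i ≠ j → ((A i j = 1 ∧ A j i = 0) ∨ (A i j = 0 ∧ A j i = 1))

/-- `μ` is an eigenvalue of `M`: there is a nonzero vector `v` with `Mv = μv`. -/
def IsEigenvalue {m : Type} [Fintype m] (M : Matrix m m ℂ) (μ : ℂ) : Prop :=
  ∃ v : m → ℂ, v ≠ 0 ∧ M.mulVec v = μ • v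

section ILTT

open Matrix

variable {m R : Type*} [DecidableEq m]

/-- The adjacency matrix of the ILTT extension of the digraph with adjacency matrix `A`: the left
summand of `m ⊕ m` indexes the original nodes and the right summand their clones. -/
def ilttMatrix [AddMonoidWithOne R] (A : Matrix m m R) : Matrix (m ⊕ m) (m ⊕ m) R :=
  fromBlocks A A (1 + A) A

variable [Fintype m]

lemma ilttMatrix_mulVec_sumElim [NonAssocSemiring R] (A : Matrix m m R) (x y : m → R) :
    ilttMatrix A *ᵥ Sum.elim x y = Sum.elim (A *ᵥ (x + y)) (x + A *ᵥ (x + y)) := by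
  rw [ilttMatrix, fromBlocks_mulVec, Sum.elim_comp_inl, Sum.elim_comp_inr, add_mulVec, one_mulVec,
    add_assoc, mulVec_add]

variable [Ring R]

lemma ilttMatrix_mulVec_sumElim_eq_smul_iff (A : Matrix m m R) (μ : R) (x y : m → R) :
    ilttMatrix A *ᵥ Sum.elim x y = μ • Sum.elim x y ↔
      A *ᵥ (x + y) = μ • x ∧ x = μ • (y - x) := by
  have smul_elim : μ • Sum.elim x y = Sum.elim (μ • x) (μ • y) := Sum.comp_elim (μ • ·) x y
  rw [ilttMatrix_mulVec_sumElim, smul_elim, Sum.elim_eq_iff, smul_sub, eq_sub_iff_add_eq]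
  exact and_congr_right fun h => by rw [h]

theorem stmt16_general (A : Matrix m m R) {μ : R} (hμ : 2 * μ = -1) {v : m ⊕ m → R}
    (hv : ilttMatrix A *ᵥ v = μ • v) : v = 0 := by
  obtain ⟨x, y, rfl⟩ : ∃ x y, v = Sum.elim x y := ⟨_, _, (Sum.elim_comp_inl_inr v).symm⟩
  obtain ⟨hA, hxy⟩ := (ilttMatrix_mulVec_sumElim_eq_smul_iff A μ x y).1 hv
  have two_smul_mul (z : m → R) : (2 : R) • μ • z = -z := by rw [smul_smul, hμ, neg_one_smul]
  have sum_zero : x + y = 0 := by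
    have two_x : x + x = x + -y := by
      rw [← two_smul R x, ← sub_eq_add_neg, ← neg_sub y x, ← two_smul_mul, ← hxy]
    exact eq_neg_iff_add_eq_zero.1 (add_left_cancel two_x)
  have x_zero : x = 0 := by
    rw [← neg_eq_zero, ← two_smul_mul, ← hA, sum_zero, mulVec_zero, smul_zero]
  have y_zero : y = 0 := by rwa [x_zero, zero_add] at sum_zero
  rw [x_zero, y_zero, Sum.elim_zero_zero]

end ILTT

/-- If `A` is the adjacency matrix of a tournament on `n` nodes and
`B = [[A, A], [I + A, A]]` is the adjacency matrix of `ILTT(G)`, then `-1/2` is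
not an eigenvalue of `B`. -/
theorem stmt16 (n : ℕ) (A : Matrix (Fin n) (Fin n) ℂ)
    (hA : IsTournamentAdjMatrix A) :
    ¬ IsEigenvalue (Matrix.fromBlocks A A (1 + A) A) (-1 / 2 : ℂ) := by
  exact fun ⟨_, hv, h⟩ => hv (stmt16_general A (by norm_num) h)
end

section
/- Let A be the (complex) adjacency matrix of a tournament G on n nodes, and let B be the 2n × 2n block matrix B = [[A, A], [I + A, A]] (the adjacency matrix of ILTT(G)). Then for every nonzero complex number μ, μ is an eigenvalue of B if and only if there exists a nonzero eigenvalue λ of A such that μ² − 2λμ − λ = 0 (equivalently, μ = λ ± (λ² + λ)^{1/2}). -/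
/-!
Let `B = [[A, A], [1 + A, A]]` and `μ ≠ 0`. Subtracting the two rows of `B (x, y) = μ (x, y)` gives
`x = μ (y - x)`, so `y` is determined by `x`, and eliminating it leaves `(2μ + 1) A x = μ² x`.
If `x ≠ 0`, the right-hand side is nonzero, hence so is `2μ + 1`, and `x` is an eigenvector of `A`
for `λ = μ² / (2μ + 1)`, which is the unique root in `λ` of `μ² - 2λμ - λ = 0`.
-/

open Matrix Module

theorem hasEigenvalue_iff_exists_apply_eq_smul {R M : Type*} [CommRing R] [AddCommGroup M]
    [Module R M] {f : End R M} {μ : R} : f.HasEigenvalue μ ↔ ∃ x, x ≠ 0 ∧ f x = μ • x := by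
  refine ⟨fun h ↦ ?_, fun ⟨x, hx0, hx⟩ ↦ ?_⟩
  · obtain ⟨x, hx⟩ := h.exists_hasEigenvector
    exact ⟨x, hx.2, hx.apply_eq_smul⟩
  · exact End.hasEigenvalue_of_hasEigenvector ⟨End.mem_eigenspace_iff.2 hx, hx0⟩

theorem exists_smul_apply_eq_smul_iff_exists_hasEigenvalue {K V : Type*} [Field K]
    [AddCommGroup V] [Module K V] {f : End K V} {a b : K} (hb : b ≠ 0) :
    (∃ x, x ≠ 0 ∧ a • f x = b • x) ↔ ∃ c, c ≠ 0 ∧ f.HasEigenvalue c ∧ a * c = b := by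
  simp only [hasEigenvalue_iff_exists_apply_eq_smul]
  constructor
  · rintro ⟨x, hx0, hx⟩
    have ha : a ≠ 0 := by
      rintro rfl
      exact smul_ne_zero hb hx0 (by rw [← hx, zero_smul])
    refine ⟨b / a, div_ne_zero hb ha, ⟨x, hx0, ?_⟩, mul_div_cancel₀ b ha⟩
    rw [div_eq_inv_mul, mul_smul, ← hx, inv_smul_smul₀ ha]
  · rintro ⟨c, -, ⟨x, hx0, hx⟩, rfl⟩
    exact ⟨x, hx0, by rw [hx, smul_smul]⟩

section Block

variable {m : Type*} [Fintype m] [DecidableEq m]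

theorem fromBlocks_mulVec_elim_eq_smul_iff {R : Type*} [NonAssocSemiring R]
    {A : Matrix m m R} {μ : R} {x y : m → R} :
    fromBlocks A A (1 + A) A *ᵥ Sum.elim x y = μ • Sum.elim x y ↔
      A *ᵥ (x + y) = μ • x ∧ x + A *ᵥ (x + y) = μ • y := by
  have hsmul : μ • Sum.elim x y = Sum.elim (μ • x) (μ • y) := by
    ext (i | i) <;> rfl
  rw [fromBlocks_mulVec, hsmul, Sum.elim_eq_iff]
  simp only [Sum.elim_comp_inl, Sum.elim_comp_inr, add_mulVec, one_mulVec, mulVec_add, add_assoc]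

theorem fromBlocks_mulVec_elim_eq_smul_iff_of_ne_zero {R : Type*} [CommRing R] [IsDomain R]
    {A : Matrix m m R} {μ : R} (hμ : μ ≠ 0) {x y : m → R} :
    fromBlocks A A (1 + A) A *ᵥ Sum.elim x y = μ • Sum.elim x y ↔
      μ • y = (1 + μ) • x ∧ (2 * μ + 1) • A *ᵥ x = μ ^ 2 • x := by
  have first_row (hy : μ • y = (1 + μ) • x) :
      A *ᵥ (x + y) = μ • x ↔ (2 * μ + 1) • A *ᵥ x = μ ^ 2 • x := by
    have hxy : μ • (x + y) = (2 * μ + 1) • x := by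
      rw [smul_add, hy]
      module
    rw [← mulVec_smul, ← hxy, mulVec_smul, sq, mul_smul, smul_right_inj hμ]
  have second_row (h : A *ᵥ (x + y) = μ • x) :
      x + A *ᵥ (x + y) = μ • y ↔ μ • y = (1 + μ) • x := by
    rw [h, add_smul, one_smul, eq_comm]
  rw [fromBlocks_mulVec_elim_eq_smul_iff, and_congr_right second_row, and_comm,
    and_congr_right first_row]

variable {K : Type*} [Field K]

theorem hasEigenvalue_fromBlocks_iff {A : Matrix m m K} {μ : K} (hμ : μ ≠ 0) :
    End.HasEigenvalue (toLin' (fromBlocks A A (1 + A) A)) μ ↔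
      ∃ x, x ≠ 0 ∧ (2 * μ + 1) • toLin' A x = μ ^ 2 • x := by
  simp only [hasEigenvalue_iff_exists_apply_eq_smul, toLin'_apply]
  constructor
  · rintro ⟨v, hv0, hv⟩
    obtain ⟨x, y, rfl⟩ : ∃ x y, v = Sum.elim x y := ⟨_, _, (Sum.elim_comp_inl_inr v).symm⟩
    obtain ⟨hy, hx⟩ := (fromBlocks_mulVec_elim_eq_smul_iff_of_ne_zero hμ).1 hv
    refine ⟨x, ?_, hx⟩
    rintro rfl
    have hy0 : y = 0 := by simpa [hμ] using hy
    exact hv0 (by rw [hy0, Sum.elim_zero_zero])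
  · rintro ⟨x, hx0, hx⟩
    refine ⟨Sum.elim x (((1 + μ) / μ) • x), fun h ↦ hx0 ?_,
      (fromBlocks_mulVec_elim_eq_smul_iff_of_ne_zero hμ).2 ⟨?_, hx⟩⟩
    · exact funext fun i ↦ congrFun h (Sum.inl i)
    · rw [smul_smul, mul_div_cancel₀ _ hμ]

theorem stmt17_general (A : Matrix m m K) {μ : K} (hμ : μ ≠ 0) :
    End.HasEigenvalue (toLin' (fromBlocks A A (1 + A) A)) μ ↔
      ∃ lam, lam ≠ 0 ∧ End.HasEigenvalue (toLin' A) lam ∧ μ ^ 2 - 2 * lam * μ - lam = 0 := by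
  have root_iff (lam : K) : (2 * μ + 1) * lam = μ ^ 2 ↔ μ ^ 2 - 2 * lam * μ - lam = 0 := by
    constructor <;> intro h <;> linear_combination -h
  rw [hasEigenvalue_fromBlocks_iff hμ,
    exists_smul_apply_eq_smul_iff_exists_hasEigenvalue (pow_ne_zero 2 hμ)]
  simp only [root_iff]

end Block

theorem isEigenvalue_iff_hasEigenvalue_toLin' {m : Type} [Fintype m] [DecidableEq m]
    {M : Matrix m m ℂ} {μ : ℂ} : IsEigenvalue M μ ↔ End.HasEigenvalue (toLin' M) μ := by
  simp only [IsEigenvalue, hasEigenvalue_iff_exists_apply_eq_smul, toLin'_apply]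

/-- If `A` is the adjacency matrix of a tournament on `n` nodes and
`B = [[A, A], [I + A, A]]`, then a nonzero `μ` is an eigenvalue of `B` iff there
is a nonzero eigenvalue `λ` of `A` with `μ² - 2λμ - λ = 0`. -/
theorem stmt17 (n : ℕ) (A : Matrix (Fin n) (Fin n) ℂ)
    (hA : IsTournamentAdjMatrix A) (μ : ℂ) (hμ : μ ≠ 0) :
    IsEigenvalue (Matrix.fromBlocks A A (1 + A) A) μ ↔
      ∃ lam : ℂ, lam ≠ 0 ∧ IsEigenvalue A lam ∧
        μ ^ 2 - 2 * lam * μ - lam = 0 := by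
  simpa only [isEigenvalue_iff_hasEigenvalue_toLin'] using stmt17_general A hμ
end
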